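/- Log-ratio bound for the mixture density: under the conditional-density setup, let P and Q be probability measures on 𝒲 and ξ ≥ 0, and suppose that for every d ∈ 𝒟 the map w ↦ f(d, w) is bounded with 0 < inf_{w∈𝒲} f(d, w) and sup_{w∈𝒲} f(d, w) ≤ e^{2ξ} · inf_{w∈𝒲} f(d, w). Let ḡ(d) = (g_P(d) + g_Q(d))/2. Then for every d ∈ 𝒟, |log(ḡ(d) / g_P(d))| ≤ (1/2)·(e^{2ξ} − 1)·TV(P, Q). -/

import Mathlib

open MeasureTheory

/-- Total variation distance between two measures: the supremum over measurable sets `A`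
of `|P(A) − Q(A)|`. -/
noncomputable def tvDist {Ω : Type*} [MeasurableSpace Ω] (P Q : Measure Ω) : ℝ :=
  ⨆ A : {s : Set Ω // MeasurableSet s}, |(P A.1).toReal - (Q A.1).toReal|

/-! By the layer-cake formula `∫ h dP - ∫ h dQ` integrates `P {h ≥ t} - Q {h ≥ t}` over an interval
of length `sup h - inf h`, so it is at most `(sup h - inf h) * TV(P, Q)`. Applied to `h = f d`, this
bounds `|ḡ d - g_P d| = |g_Q d - g_P d| / 2`; both densities are at least `m = inf h`, and `log` is
`m⁻¹`-Lipschitz on `[m, ∞)`. -/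

section TotalVariation

variable {Ω : Type*} [MeasurableSpace Ω] (P Q : Measure Ω)

theorem abs_measureReal_sub_le_tvDist [IsFiniteMeasure P] [IsFiniteMeasure Q]
    {s : Set Ω} (hs : MeasurableSet s) : |P.real s - Q.real s| ≤ tvDist P Q := by
  refine le_ciSup (f := fun A : {s : Set Ω // MeasurableSet s} ↦ |P.real A.1 - Q.real A.1|)
    ⟨max (P.real .univ) (Q.real .univ), Set.forall_mem_range.2 fun A ↦ ?_⟩ ⟨s, hs⟩
  exact abs_sub_le_of_nonneg_of_le
    measureReal_nonneg ((measureReal_mono A.1.subset_univ).trans (le_max_left _ _))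
    measureReal_nonneg ((measureReal_mono A.1.subset_univ).trans (le_max_right _ _))

variable {P Q} {h : Ω → ℝ}

theorem integral_sub_integral_eq_integral_measureReal_superlevel_sub
    [IsFiniteMeasure P] [IsFiniteMeasure Q] {c : ℝ} (hP : Integrable h P) (hQ : Integrable h Q)
    (hmem : ∀ w, h w ∈ Set.Icc 0 c) :
    ∫ w, h w ∂P - ∫ w, h w ∂Q =
      ∫ t in Set.Ioc 0 c, (P.real {w | t ≤ h w} - Q.real {w | t ≤ h w}) := by
  have integrableOn_superlevel (ν : Measure Ω) [IsFiniteMeasure ν] :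
      IntegrableOn (fun t ↦ ν.real {w | t ≤ h w}) (Set.Ioc 0 c) := by
    have antitone_superlevel : Antitone fun t ↦ ν.real {w | t ≤ h w} :=
      fun _ _ hst ↦ measureReal_mono fun _ hw ↦ hst.trans hw
    exact ((antitone_superlevel.antitoneOn _).integrableOn_isCompact isCompact_Icc).mono_set
      Set.Ioc_subset_Icc_self
  have nonneg (w : Ω) : 0 ≤ h w := (hmem w).1
  have le_c (w : Ω) : h w ≤ c := (hmem w).2
  rw [hP.integral_eq_integral_Ioc_meas_le (.of_forall nonneg) (.of_forall le_c),
    hQ.integral_eq_integral_Ioc_meas_le (.of_forall nonneg) (.of_forall le_c),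
    integral_sub (integrableOn_superlevel P) (integrableOn_superlevel Q)]

theorem abs_integral_sub_le_mul_tvDist [IsProbabilityMeasure P] [IsProbabilityMeasure Q]
    (hh : Measurable h) {a b : ℝ} (hmem : ∀ w, h w ∈ Set.Icc a b) :
    |∫ w, h w ∂P - ∫ w, h w ∂Q| ≤ (b - a) * tvDist P Q := by
  have integrable_h (ν : Measure Ω) [IsProbabilityMeasure ν] : Integrable h ν :=
    .of_mem_Icc a b hh.aemeasurable (.of_forall hmem)
  have integral_shift (ν : Measure Ω) [IsProbabilityMeasure ν] :
      ∫ w, (h w - a) ∂ν = ∫ w, h w ∂ν - a := by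
    simp [integral_sub (integrable_h ν) (integrable_const a)]
  have shift_mem (w : Ω) : h w - a ∈ Set.Icc 0 (b - a) :=
    ⟨sub_nonneg.2 (hmem w).1, sub_le_sub_right (hmem w).2 a⟩
  have hab : 0 ≤ b - a :=
    have ⟨w⟩ := nonempty_of_isProbabilityMeasure P
    (shift_mem w).1.trans (shift_mem w).2
  calc |∫ w, h w ∂P - ∫ w, h w ∂Q|
    _ = |∫ w, (h w - a) ∂P - ∫ w, (h w - a) ∂Q| := by
        rw [integral_shift, integral_shift, sub_sub_sub_cancel_right]
    _ = |∫ t in Set.Ioc 0 (b - a), (P.real {w | t ≤ h w - a} - Q.real {w | t ≤ h w - a})| := by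
        rw [integral_sub_integral_eq_integral_measureReal_superlevel_sub
          (h := fun w ↦ h w - a) ((integrable_h P).sub (integrable_const a))
          ((integrable_h Q).sub (integrable_const a)) shift_mem]
    _ ≤ tvDist P Q * volume.real (Set.Ioc 0 (b - a)) := by
        rw [← Real.norm_eq_abs]
        exact norm_setIntegral_le_of_norm_le_const measure_Ioc_lt_top fun t _ ↦
          abs_measureReal_sub_le_tvDist P Q (measurableSet_le measurable_const (hh.sub_const a))
    _ = (b - a) * tvDist P Q := by rw [Real.volume_real_Ioc_of_le hab, sub_zero, mul_comm]

end TotalVariation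

theorem abs_log_sub_log_le_abs_sub_div {m x y : ℝ} (hm : 0 < m) (hx : m ≤ x) (hy : m ≤ y) :
    |Real.log x - Real.log y| ≤ |x - y| / m := by
  have hasDerivWithinAt_log (z : ℝ) (hz : m ≤ z) :
      HasDerivWithinAt Real.log z⁻¹ (Set.Ici m) z :=
    (Real.hasDerivAt_log (hm.trans_le hz).ne').hasDerivWithinAt
  have norm_inv_le (z : ℝ) (hz : m ≤ z) : ‖z⁻¹‖ ≤ m⁻¹ := by
    rw [norm_inv, Real.norm_of_nonneg (hm.le.trans hz)]
    exact inv_anti₀ hm hz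
  rw [div_eq_inv_mul]
  exact (convex_Ici m).norm_image_sub_le_of_norm_hasDerivWithin_le
    hasDerivWithinAt_log norm_inv_le hy hx

theorem log_ratio_mixture_density_bound_general {W : Type*} [MeasurableSpace W]
    (P Q : Measure W) [IsProbabilityMeasure P] [IsProbabilityMeasure Q]
    {h : W → ℝ} (hh : Measurable h) {m K : ℝ} (hm : 0 < m)
    (hmem : ∀ w, h w ∈ Set.Icc m (K * m)) {t : ℝ} (ht : t ∈ Set.Icc 0 1) :
    |Real.log (((1 - t) * ∫ w, h w ∂P + t * ∫ w, h w ∂Q) / ∫ w, h w ∂P)| ≤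
      t * (K - 1) * tvDist P Q := by
  have le_integral (ν : Measure W) [IsProbabilityMeasure ν] : m ≤ ∫ w, h w ∂ν :=
    ((convex_Icc m (K * m)).integral_mem isClosed_Icc (.of_forall hmem)
      (.of_mem_Icc _ _ hh.aemeasurable (.of_forall hmem))).1
  have integral_diff : |∫ w, h w ∂P - ∫ w, h w ∂Q| ≤ (K * m - m) * tvDist P Q :=
    abs_integral_sub_le_mul_tvDist hh hmem
  set gP := ∫ w, h w ∂P
  set gQ := ∫ w, h w ∂Q
  have hgP : m ≤ gP := le_integral P
  have le_mixture : m ≤ (1 - t) * gP + t * gQ :=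
    convex_Ici m hgP (le_integral Q) (sub_nonneg.2 ht.2) ht.1 (sub_add_cancel 1 t)
  calc |Real.log (((1 - t) * gP + t * gQ) / gP)|
    _ = |Real.log ((1 - t) * gP + t * gQ) - Real.log gP| := by
        rw [Real.log_div (hm.trans_le le_mixture).ne' (hm.trans_le hgP).ne']
    _ ≤ |(1 - t) * gP + t * gQ - gP| / m := abs_log_sub_log_le_abs_sub_div hm le_mixture hgP
    _ = t * |gP - gQ| / m := by
        rw [show (1 - t) * gP + t * gQ - gP = t * (gQ - gP) by ring, abs_mul, abs_of_nonneg ht.1,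
          abs_sub_comm]
    _ ≤ t * ((K * m - m) * tvDist P Q) / m := by gcongr; exact ht.1
    _ = t * (K - 1) * tvDist P Q := by field_simp

/-- Log-ratio bound for the mixture density: in the conditional-density setup, if for every
`d` the conditional density `w ↦ f d w` is bounded with positive infimum and
`sup_w f d w ≤ e^{2ξ} · inf_w f d w`, and `ḡ = (g_P + g_Q)/2` is the mixture of the induced
marginal densities, then for every `d`,
`|log(ḡ(d)/g_P(d))| ≤ (1/2) (e^{2ξ} − 1) TV(P, Q)`. -/
theorem log_ratio_mixture_density_bound
    {W D : Type*} [MeasurableSpace W] [MeasurableSpace D] [Nonempty W]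
    (μ : Measure D) [SigmaFinite μ]
    (f : D → W → ℝ) (hf_meas : Measurable (Function.uncurry f))
    (hf_nonneg : ∀ d w, 0 ≤ f d w)
    (hf_density : ∀ w, ∫ d, f d w ∂μ = 1)
    (P Q : Measure W) [IsProbabilityMeasure P] [IsProbabilityMeasure Q]
    (ξ : ℝ) (hξ : 0 ≤ ξ)
    (hbdd : ∀ d, BddAbove (Set.range fun w => f d w))
    (hinf_pos : ∀ d, 0 < ⨅ w, f d w)
    (hratio : ∀ d, (⨆ w, f d w) ≤ Real.exp (2 * ξ) * ⨅ w, f d w)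
    (gP gQ gbar : D → ℝ)
    (hgP : ∀ d, gP d = ∫ w, f d w ∂P)
    (hgQ : ∀ d, gQ d = ∫ w, f d w ∂Q)
    (hgbar : ∀ d, gbar d = (gP d + gQ d) / 2) :
    ∀ d, |Real.log (gbar d / gP d)| ≤ (1 / 2) * (Real.exp (2 * ξ) - 1) * tvDist P Q := by
  intro d
  have inf_le (w : W) : ⨅ w, f d w ≤ f d w := ciInf_le ⟨0, Set.forall_mem_range.2 (hf_nonneg d)⟩ w
  have le_sup (w : W) : f d w ≤ ⨆ w, f d w := le_ciSup (hbdd d) w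
  have mixture : gbar d = (1 - 1 / 2) * gP d + 1 / 2 * gQ d := by rw [hgbar]; ring
  rw [mixture, hgP, hgQ]
  exact log_ratio_mixture_density_bound_general P Q hf_meas.of_uncurry_left (hinf_pos d)
    (fun w ↦ ⟨inf_le w, (le_sup w).trans (hratio d)⟩) (by norm_num)
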